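/- Let R be an order in a quadratic number field K with maximal order O_K, and let S be an order with R ⊆ S ⊆ O_K of index n = [O_K : S]. Then #Pic(S) = (#Pic(O_K) / [O_K^× : S^×]) · n · ∏_{p | n} (1 − (Δ_K/p)·(1/p)), where (Δ_K/p) is the Kronecker symbol of the discriminant of K. -/

import Mathlib

open NumberField

/-- The Kronecker symbol `(D/p)` of a discriminant `D` at a prime `p` (Legendre symbol for
odd `p`, Kronecker symbol at `2`). -/
noncomputable def kronSym (D : ℤ) (p : ℕ) : ℤ :=
  if p = 2 then (if 2 ∣ D then 0 else if D % 8 = 1 ∨ D % 8 = 7 then 1 else -1)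
  else (Nat.card {x : ZMod p // x ^ 2 = (D : ZMod p)} : ℤ) - 1

/-
Extension of scalars `I ↦ O I` maps the invertible `S`-submodules of the total quotient ring `K`
of `O` onto the invertible `O`-submodules. The conductor `f = n O` is contained in `S`, and each
element of the kernel has the form `S b + f` for a unit `b` modulo `f`, so the kernel is
`(O / f)ˣ / (S / f)ˣ`. Dividing by the principal submodules gives
`#Pic S · [Oˣ : Sˣ] · #(S / f)ˣ = #Pic O · #(O / f)ˣ`.

Here `S / f = ℤ / n`, while `O / f = (ℤ / n)[ω]` with `ω ^ 2 = a + b ω`. The units of the latter are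
counted by the Chinese remainder theorem and, modulo a prime `p`, by scaling the coefficient of `ω`
to `1`: `x + ω` has norm `x ^ 2 + b x - a`, whose number of roots modulo `p` is one more than the
Kronecker symbol of the discriminant `b ^ 2 + 4 a`.
-/

namespace QuadraticOrder

open Submodule
open scoped TensorProduct

section Approximation

theorem exists_span_singleton_sup_smul_top {A M : Type*} [CommRing A] [AddCommGroup M]
    [Module A M] [Module.Invertible A M] (f : Ideal A) [Finite (MaximalSpectrum (A ⧸ f))] :
    ∃ m : M, span A {m} ⊔ f • ⊤ = (⊤ : Submodule A M) := by
  obtain ⟨e⟩ := Module.Invertible.free_iff_linearEquiv.1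
    (inferInstance : Module.Free (A ⧸ f) ((A ⧸ f) ⊗[A] M))
  let g : (A ⧸ f) ≃ₗ[A] M ⧸ (f • ⊤ : Submodule A M) :=
    (e.restrictScalars A).symm ≪≫ₗ TensorProduct.quotTensorEquivQuotSMul M f
  obtain ⟨m, hm⟩ := mkQ_surjective (f • ⊤ : Submodule A M) (g 1)
  refine ⟨m, eq_top_iff.2 fun x _ => ?_⟩
  obtain ⟨a, ha⟩ := Ideal.Quotient.mk_surjective (g.symm (mkQ _ x))
  have hx : mkQ (f • ⊤ : Submodule A M) x = mkQ _ (a • m) := by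
    rw [map_smul, hm, ← map_smul, ← g.symm_apply_eq, ← ha, Algebra.smul_def, mul_one,
      Ideal.Quotient.algebraMap_eq]
  rw [← sub_add_cancel x (a • m), add_comm]
  exact add_mem_sup (smul_mem _ _ (mem_span_singleton_self m)) ((Submodule.Quotient.eq _).1 hx)

theorem exists_mem_span_singleton_sup_smul {A K : Type*} [CommRing A] [CommRing K] [Algebra A K]
    [FaithfulSMul A K] (f : Ideal A) [Finite (MaximalSpectrum (A ⧸ f))]
    (I : (Submodule A K)ˣ) :
    ∃ a ∈ (I : Submodule A K), span A {a} ⊔ f • (I : Submodule A K) = I := by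
  obtain ⟨m, hm⟩ := exists_span_singleton_sup_smul_top (M := (I : Submodule A K)) f
  refine ⟨m, m.2, ?_⟩
  simpa only [Submodule.map_sup, map_span, Set.image_singleton, subtype_apply, map_smul'',
    Submodule.map_top, range_subtype] using congr_arg (map (I : Submodule A K).subtype) hm

end Approximation

section Extension

variable {A B K : Type*} [CommRing A] [CommRing B] [CommRing K] [Algebra A B] [Algebra A K]
  [Algebra B K] [IsScalarTower A B K]

variable (A B K) in
/-- Extension of scalars `I ↦ B I` of the `A`-submodules of a `B`-algebra. -/
def extend : Submodule A K →* Submodule B K where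
  toFun I := span B I
  map_one' := by
    rw [one_eq_span, span_span_of_tower, ← one_eq_span]
  map_mul' I J := by
    rw [Submodule.mul_def, span_span_of_tower, span_mul_span]

theorem extend_apply (I : Submodule A K) : extend A B K I = span B I := rfl

theorem extend_span (s : Set K) : extend A B K (span A s) = span B s :=
  span_span_of_tower ..

theorem extend_sup (I J : Submodule A K) :
    extend A B K (I ⊔ J) = extend A B K I ⊔ extend A B K J := by
  rw [← span_eq I, ← span_eq J, ← span_union, extend_span, extend_span, extend_span, span_union]

theorem extend_restrictScalars (J : Submodule B K) : extend A B K (J.restrictScalars A) = J :=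
  span_eq J

theorem mul_restrictScalars (I : Submodule A K) (J : Submodule B K) :
    I * J.restrictScalars A = (extend A B K I * J).restrictScalars A := by
  refine le_antisymm (Submodule.mul_le.2 fun m hm n hn => ?_) fun x hx => ?_
  · have hmB : m ∈ extend A B K I := subset_span hm
    rw [restrictScalars_mem]
    exact mul_mem_mul hmB hn
  · have smul_mem_mul : ∀ (b : B), ∀ x ∈ I * J.restrictScalars A,
        b • x ∈ I * J.restrictScalars A := fun b x hx => by
      induction hx using Submodule.mul_induction_on' with
      | mem_mul_mem m hm n hn =>
        rw [← mul_smul_comm]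
        exact mul_mem_mul hm (J.smul_mem b hn)
      | add x _ y _ hx hy => rw [smul_add]; exact add_mem hx hy
    rw [restrictScalars_mem, extend_apply, ← span_eq J, span_mul_span] at hx
    induction hx using span_induction with
    | mem x hx =>
      obtain ⟨m, hm, n, hn, rfl⟩ := hx
      exact mul_mem_mul hm hn
    | zero => exact zero_mem _
    | add x y _ _ hx hy => exact add_mem hx hy
    | smul b x _ hx => exact smul_mem_mul b x hx

/-- The `A`-submodule `A a + f J`. When `a` generates `J` modulo `f J`, it is a lattice whose
extension to `B` is `J`. -/
def glue (A : Type*) {B K : Type*} [CommRing A] [CommRing B] [CommRing K] [Algebra A B]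
    [Algebra A K] [Algebra B K] [IsScalarTower A B K] (f : Ideal B) (J : Submodule B K) (a : K) :
    Submodule A K :=
  span A {a} ⊔ (f • J).restrictScalars A

theorem extend_glue (f : Ideal B) (J : Submodule B K) (a : K) :
    extend A B K (glue A f J a) = span B {a} ⊔ f • J := by
  rw [glue, extend_sup, extend_span, extend_restrictScalars]

theorem glue_mul_glue {f : Ideal B} {J J' : Submodule B K} {a a' : K}
    (ha : span B {a} ⊔ f • J = J) (ha' : a' ∈ J') :
    glue A f J a * glue A f J' a' = glue A f (J * J') (a * a') := by
  have hle : span B {a'} + J' = J' := sup_eq_right.2 ((span_singleton_le_iff_mem _ _).2 ha')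
  have key : span B {a} * f • J' + f • J * (span B {a'} + f • J') = f • (J * J') :=
    calc span B {a} * f • J' + f • J * (span B {a'} + f • J')
      _ = f • ((span B {a} + f • J) * J' + J * span B {a'}) := by
        simp only [Algebra.smul_def]; ring
      _ = f • (J * (span B {a'} + J')) := by rw [Submodule.add_eq_sup (span B {a}), ha]; ring_nf
      _ = f • (J * J') := by rw [hle]
  rw [glue, glue, Submodule.sup_mul, Submodule.mul_sup, span_mul_span,
    Set.singleton_mul_singleton, mul_restrictScalars, extend_span, mul_comm _ (_ ⊔ _),
    mul_restrictScalars, extend_sup, extend_span, extend_restrictScalars, sup_assoc,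
    ← restrictScalars_sup, mul_comm _ (f • J), ← Submodule.add_eq_sup (span B {a'}),
    ← Submodule.add_eq_sup (span B {a} * _), key, glue]

end Extension

section Conductor

variable {A B K : Type*} [CommRing A] [CommRing B] [CommRing K] [Algebra A B] [Algebra A K]
  [Algebra B K] [IsScalarTower A B K]

variable (A K) in
/-- The image in `K` of the preimage in `B` of the cyclic `A`-submodule of `B ⧸ f` generated by
`u`; that is, the `A`-submodule `A b + f` for any lift `b` of `u`. -/
def residueLattice (f : Ideal B) (u : B ⧸ f) : Submodule A K :=
  ((span A {u}).comap (IsScalarTower.toAlgHom A B (B ⧸ f)).toLinearMap).map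
    (IsScalarTower.toAlgHom A B K).toLinearMap

theorem smul_one_eq_map (f : Ideal B) :
    f • (1 : Submodule B K) = Submodule.map (Algebra.linearMap B K) f := by
  rw [Algebra.smul_def, mul_one]; rfl

theorem residueLattice_mk (f : Ideal B) (b : B) :
    residueLattice A K f (Ideal.Quotient.mk f b) = glue A f 1 (algebraMap B K b) := by
  have hspan : span A {Ideal.Quotient.mk f b} =
      (span A {b}).map (IsScalarTower.toAlgHom A B (B ⧸ f)).toLinearMap := by
    rw [map_span, Set.image_singleton]; rfl
  have hker : LinearMap.ker (IsScalarTower.toAlgHom A B (B ⧸ f)).toLinearMap =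
      f.restrictScalars A := by
    ext x
    exact Ideal.Quotient.eq_zero_iff_mem
  rw [residueLattice, hspan, Submodule.comap_map_eq, hker, Submodule.map_sup, map_span,
    Set.image_singleton, glue, smul_one_eq_map]
  rfl

theorem residueLattice_one {f : Ideal B} (hf : ∀ b ∈ f, b ∈ Set.range (algebraMap A B)) :
    residueLattice A K f 1 = 1 := by
  rw [← map_one (Ideal.Quotient.mk f), residueLattice_mk, glue, map_one, ← one_eq_span,
    sup_eq_left, smul_one_eq_map]
  rintro _ ⟨b, hb, rfl⟩
  obtain ⟨a, rfl⟩ := hf b hb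
  exact mem_one.2 ⟨a, IsScalarTower.algebraMap_apply A B K a⟩

theorem isUnit_mk_iff_sup_eq_top {f : Ideal B} {b : B} :
    IsUnit (Ideal.Quotient.mk f b) ↔ Ideal.span {b} ⊔ f = ⊤ := by
  have hmap : (Ideal.span {b} ⊔ f).map (Ideal.Quotient.mk f) =
      Ideal.span {Ideal.Quotient.mk f b} := by
    rw [Ideal.map_sup, Ideal.map_quotient_self, sup_bot_eq, Ideal.map_span, Set.image_singleton]
  rw [← Ideal.span_singleton_eq_top, ← hmap, ← Ideal.comap_eq_top_iff (f := Ideal.Quotient.mk f),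
    Ideal.comap_map_mk le_sup_right]

theorem isUnit_mk_iff [FaithfulSMul B K] {f : Ideal B} {b : B} :
    IsUnit (Ideal.Quotient.mk f b) ↔
      span B {algebraMap B K b} ⊔ f • (1 : Submodule B K) = 1 := by
  have hmap : span B {algebraMap B K b} ⊔ f • (1 : Submodule B K) =
      Submodule.map (Algebra.linearMap B K) (Ideal.span {b} ⊔ f) := by
    rw [Submodule.map_sup, smul_one_eq_map, Ideal.span, map_span, Set.image_singleton,
      Algebra.linearMap_apply]
  have hinj : Function.Injective (map (Algebra.linearMap B K)) :=
    map_injective_of_injective (FaithfulSMul.algebraMap_injective B K)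
  rw [hmap, one_eq_range, ← Submodule.map_top, hinj.eq_iff, isUnit_mk_iff_sup_eq_top]

theorem span_singleton_mul_sup_smul {f : Ideal B} {J J' : Submodule B K} {a a' : K}
    (ha : span B {a} ⊔ f • J = J) (ha' : span B {a'} ⊔ f • J' = J') :
    span B {a * a'} ⊔ f • (J * J') = J * J' := by
  have mem : a' ∈ J' := ha'.le (mem_sup_left (mem_span_singleton_self a'))
  have h := congr_arg (extend B B K) (glue_mul_glue (A := B) ha mem)
  rwa [map_mul, extend_glue, extend_glue, extend_glue, ha, ha', eq_comm] at h

variable (K) in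
/-- A unit `u` modulo an ideal `f` of `B` that comes from `A` defines the invertible
`A`-submodule `A u + f`. -/
def residueHom [FaithfulSMul B K] (f : Ideal B) (hf : ∀ b ∈ f, b ∈ Set.range (algebraMap A B)) :
    (B ⧸ f)ˣ →* (Submodule A K)ˣ :=
  MonoidHom.toHomUnits
    { toFun u := residueLattice A K f u
      map_one' := residueLattice_one hf
      map_mul' u v := by
        obtain ⟨b, hb⟩ := Ideal.Quotient.mk_surjective (u : B ⧸ f)
        obtain ⟨c, hc⟩ := Ideal.Quotient.mk_surjective (v : B ⧸ f)
        rw [Units.val_mul, ← hb, ← hc, ← map_mul, residueLattice_mk, residueLattice_mk,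
          residueLattice_mk, glue_mul_glue (isUnit_mk_iff.1 (hb ▸ u.isUnit))
            (algebraMap_mem c), one_mul, map_mul] }

section

variable [FaithfulSMul B K] {f : Ideal B} (hf : ∀ b ∈ f, b ∈ Set.range (algebraMap A B))

theorem coe_residueHom (u : (B ⧸ f)ˣ) :
    (residueHom K f hf u : Submodule A K) = residueLattice A K f u := rfl

theorem ker_residueHom :
    (residueHom K f hf).ker =
      (Units.map (algebraMap (A ⧸ f.under A) (B ⧸ f)).toMonoidHom).range := by
  ext u
  have hsurj : Function.Surjective (IsScalarTower.toAlgHom A B (B ⧸ f)).toLinearMap :=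
    Ideal.Quotient.mk_surjective
  have hinj : Function.Injective (IsScalarTower.toAlgHom A B K).toLinearMap :=
    FaithfulSMul.algebraMap_injective B K
  have hspan (v : B ⧸ f) : span A {v} = (span (A ⧸ f.under A) {v}).restrictScalars A :=
    (restrictScalars_span A (A ⧸ f.under A) Ideal.Quotient.mk_surjective {v}).symm
  rw [MonoidHom.mem_ker, Units.ext_iff, coe_residueHom, Units.val_one, ← residueLattice_one hf,
    residueLattice, residueLattice, (map_injective_of_injective hinj).eq_iff,
    (comap_injective_of_surjective hsurj).eq_iff, hspan, hspan,
    (restrictScalars_injective _ _ _).eq_iff, ← one_eq_span, span_singleton_eq_one_iff]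
  exact exists_congr fun r => eq_comm.trans (Units.ext_iff (u := Units.map _ r) (v := u)).symm

end

theorem under_smul_eq {f : Ideal B} (hf : ∀ b ∈ f, b ∈ Set.range (algebraMap A B))
    (I : Submodule A K) : f.under A • I = (f • extend A B K I).restrictScalars A := by
  have hmap : Submodule.map (Algebra.linearMap A K) (f.under A) =
      (Submodule.map (Algebra.linearMap B K) f).restrictScalars A := by
    ext x
    constructor
    · rintro ⟨y, hy, rfl⟩
      exact ⟨_, hy, (IsScalarTower.algebraMap_apply A B K y).symm⟩
    · rintro ⟨y, hy, rfl⟩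
      obtain ⟨a, rfl⟩ := hf y hy
      exact ⟨a, hy, IsScalarTower.algebraMap_apply A B K a⟩
  rw [Algebra.smul_def, Algebra.smul_def, mul_comm, mul_comm _ (extend A B K I)]
  exact (congr_arg (I * ·) hmap).trans (mul_restrictScalars _ _)

theorem range_residueHom [FaithfulSMul A K] [FaithfulSMul B K] {f : Ideal B}
    (hf : ∀ b ∈ f, b ∈ Set.range (algebraMap A B)) [Finite (MaximalSpectrum (A ⧸ f.under A))] :
    (residueHom K f hf).range = (Units.map (extend A B K)).ker := by
  ext I
  rw [MonoidHom.mem_range, MonoidHom.mem_ker, Units.ext_iff, Units.coe_map, Units.val_one]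
  constructor
  · rintro ⟨u, rfl⟩
    obtain ⟨b, hb⟩ := Ideal.Quotient.mk_surjective (u : B ⧸ f)
    rw [coe_residueHom, ← hb, residueLattice_mk]
    exact (extend_glue f 1 _).trans (isUnit_mk_iff.1 (hb ▸ u.isUnit))
  · intro hI
    obtain ⟨a, ha, h⟩ := exists_mem_span_singleton_sup_smul (f.under A) I
    replace hI : extend A B K I = 1 := hI
    obtain ⟨b, rfl⟩ := mem_one.1 (hI.le (subset_span ha))
    rw [under_smul_eq hf, hI] at h
    have hglue : glue A f 1 (algebraMap B K b) = I := h
    have hb : IsUnit (Ideal.Quotient.mk f b) := by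
      rw [isUnit_mk_iff (K := K), ← extend_glue (A := A), hglue, hI]
    exact ⟨hb.unit, Units.ext ((residueLattice_mk f b).trans hglue)⟩

theorem units_map_extend_surjective [FaithfulSMul B K] {f : Ideal B}
    (hf : ∀ b ∈ f, b ∈ Set.range (algebraMap A B)) [Finite (MaximalSpectrum (B ⧸ f))] :
    Function.Surjective (Units.map (extend A B K)) := by
  intro J
  obtain ⟨a, ha, h⟩ := exists_mem_span_singleton_sup_smul f J
  obtain ⟨a', ha', h'⟩ := exists_mem_span_singleton_sup_smul f J⁻¹
  obtain ⟨b, hb⟩ := mem_one.1 (J.mul_inv.le (mul_mem_mul ha ha'))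
  have hbu : IsUnit (Ideal.Quotient.mk f b) := by
    rw [isUnit_mk_iff (K := K), hb, ← J.mul_inv]
    exact span_singleton_mul_sup_smul h h'
  have hmul : glue A f J a * glue A f (J⁻¹ : (Submodule B K)ˣ) a' =
      residueHom K f hf hbu.unit := by
    rw [glue_mul_glue h ha', J.mul_inv, ← hb, ← residueLattice_mk]
    rfl
  have hI : IsUnit (glue A f J a) :=
    isUnit_of_mul_isUnit_left (hmul ▸ Units.isUnit _)
  exact ⟨hI.unit, Units.ext ((extend_glue f _ a).trans h)⟩

end Conductor

section Counting

theorem unitsToPic_surjective (A K : Type*) [CommRing A] [CommRing K] [Algebra A K]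
    [FaithfulSMul A K] [Subsingleton (CommRing.Pic K)] :
    Function.Surjective (unitsToPic A K) := by
  rw [← MonoidHom.range_eq_top, range_unitsToPic, CommRing.relPic_eq_top]

variable {A B : Type*} (K : Type*) [CommRing A] [CommRing B] [CommRing K] [Algebra A K]
  [Algebra B K]

theorem mem_ker_unitsToPic [FaithfulSMul A K] {I : (Submodule A K)ˣ} :
    I ∈ (unitsToPic A K).ker ↔ ∃ x : Kˣ, (I : Submodule A K) = span A {(x : K)} := by
  rw [ker_unitsToPic, MonoidHom.mem_range]
  exact exists_congr fun x => by rw [Units.ext_iff, eq_comm]; rfl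

variable (A B) in
/-- The principal `A`-submodule `A v` of `K` attached to a unit `v` of `B`. -/
noncomputable def spanUnit : Bˣ →* (Submodule A K)ˣ :=
  Units.map ((spanSingleton A).toMonoidHom.comp (algebraMap B K : B →* K))

theorem coe_spanUnit (v : Bˣ) : (spanUnit A B K v : Submodule A K) = span A {algebraMap B K v} :=
  rfl

variable [Algebra A B] [IsScalarTower A B K]

theorem ker_spanUnit [FaithfulSMul A K] [FaithfulSMul B K] :
    (spanUnit A B K).ker = (Units.map (algebraMap A B : A →* B)).range := by
  ext v
  rw [MonoidHom.mem_ker, Units.ext_iff, coe_spanUnit, Units.val_one, span_singleton_eq_one_iff]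
  refine exists_congr fun r => ?_
  rw [IsScalarTower.algebraMap_apply A B K, (FaithfulSMul.algebraMap_injective B K).eq_iff,
    eq_comm, Units.ext_iff]
  rfl

theorem range_spanUnit [FaithfulSMul A K] [FaithfulSMul B K] :
    (spanUnit A B K).range = (unitsToPic A K).ker ⊓ (Units.map (extend A B K)).ker := by
  ext I
  rw [Subgroup.mem_inf, mem_ker_unitsToPic, MonoidHom.mem_ker, Units.ext_iff, Units.coe_map,
    Units.val_one, MonoidHom.mem_range]
  constructor
  · rintro ⟨v, rfl⟩
    refine ⟨⟨Units.map (algebraMap B K : B →* K) v, rfl⟩, ?_⟩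
    exact (extend_span _).trans (span_singleton_eq_one_iff.2 ⟨v, rfl⟩)
  · rintro ⟨⟨x, hx⟩, hI⟩
    obtain ⟨v, hv⟩ := span_singleton_eq_one_iff.1 ((extend_span {(x : K)}).symm.trans (hx ▸ hI))
    exact ⟨v, Units.ext (by rw [coe_spanUnit, hx, ← hv])⟩

theorem ker_unitsToPic_comp_extend [FaithfulSMul A K] [FaithfulSMul B K] :
    ((unitsToPic B K).comp (Units.map (extend A B K))).ker =
      (Units.map (extend A B K)).ker ⊔ (unitsToPic A K).ker := by
  have hP : (unitsToPic B K).ker = (unitsToPic A K).ker.map (Units.map (extend A B K)) := by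
    rw [ker_unitsToPic, ker_unitsToPic, ← MonoidHom.range_comp]
    congr 1
    ext x : 2
    exact (extend_span {(x : K)}).symm
  rw [← MonoidHom.comap_ker, hP, Subgroup.comap_map_eq, sup_comm]

theorem card_pic_mul_index [FaithfulSMul A K] [FaithfulSMul B K] [Subsingleton (CommRing.Pic K)]
    (hsurj : Function.Surjective (Units.map (extend A B K))) :
    Nat.card (CommRing.Pic A) * (Units.map (algebraMap A B : A →* B)).range.index =
      Nat.card (CommRing.Pic B) * Nat.card (Units.map (extend A B K)).ker := by
  set E := (Units.map (extend A B K)).ker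
  set P := (unitsToPic A K).ker
  have hA : Nat.card (CommRing.Pic A) = P.index := by
    rw [Subgroup.index_ker, MonoidHom.range_eq_top.2 (unitsToPic_surjective A K),
      Subgroup.card_top]
  have hB : Nat.card (CommRing.Pic B) = (E ⊔ P).index := by
    have hcomp : Function.Surjective ((unitsToPic B K).comp (Units.map (extend A B K))) :=
      (unitsToPic_surjective B K).comp hsurj
    rw [← ker_unitsToPic_comp_extend, Subgroup.index_ker, MonoidHom.range_eq_top.2 hcomp,
      Subgroup.card_top]
  have hunits : (Units.map (algebraMap A B : A →* B)).range.index = Nat.card ↥(P ⊓ E) := by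
    rw [← ker_spanUnit K, Subgroup.index_ker, range_spanUnit]
  calc Nat.card (CommRing.Pic A) * (Units.map (algebraMap A B : A →* B)).range.index
    _ = P.relIndex E * (E ⊔ P).index * Nat.card ↥(P ⊓ E) := by
      rw [hA, hunits, ← Subgroup.relIndex_sup_right, Subgroup.relIndex_mul_index le_sup_right]
    _ = (E ⊔ P).index * (Nat.card ↥(P ⊓ E) * (P ⊓ E).relIndex E) := by
      rw [Subgroup.inf_relIndex_right]; ring
    _ = Nat.card (CommRing.Pic B) * Nat.card E := by
      rw [hB, ← Subgroup.relIndex_bot_left, ← Subgroup.relIndex_bot_left,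
        Subgroup.relIndex_mul_relIndex _ _ _ bot_le inf_le_right]

theorem card_ker_extend_mul_card_units [FaithfulSMul A K] [FaithfulSMul B K] {f : Ideal B}
    (hf : ∀ b ∈ f, b ∈ Set.range (algebraMap A B)) [Finite (MaximalSpectrum (A ⧸ f.under A))] :
    Nat.card (Units.map (extend A B K)).ker * Nat.card (A ⧸ f.under A)ˣ = Nat.card (B ⧸ f)ˣ := by
  have hinj : Function.Injective
      (Units.map (algebraMap (A ⧸ f.under A) (B ⧸ f)).toMonoidHom) :=
    Units.map_injective (FaithfulSMul.algebraMap_injective _ _)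
  rw [← range_residueHom hf, ← Subgroup.index_ker, ← (residueHom K f hf).ker.index_mul_card,
    ker_residueHom, Nat.card_congr (MonoidHom.ofInjective hinj).toEquiv]

theorem card_pic_mul_index_mul_card_units [FaithfulSMul A K] [FaithfulSMul B K]
    [Subsingleton (CommRing.Pic K)] {f : Ideal B}
    (hf : ∀ b ∈ f, b ∈ Set.range (algebraMap A B)) [Finite (B ⧸ f)] :
    Nat.card (CommRing.Pic A) * (Units.map (algebraMap A B : A →* B)).range.index *
        Nat.card (A ⧸ f.under A)ˣ =
      Nat.card (CommRing.Pic B) * Nat.card (B ⧸ f)ˣ := by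
  have : Finite (A ⧸ f.under A) :=
    Finite.of_injective _ (FaithfulSMul.algebraMap_injective (A ⧸ f.under A) (B ⧸ f))
  rw [card_pic_mul_index K (units_map_extend_surjective hf), mul_assoc,
    card_ker_extend_mul_card_units K hf]

theorem finiteIndex_range_units [FaithfulSMul A B] {f : Ideal B}
    (hf : ∀ b ∈ f, b ∈ Set.range (algebraMap A B)) [Finite (B ⧸ f)] :
    (Units.map (algebraMap A B : A →* B)).range.FiniteIndex := by
  refine Subgroup.finiteIndex_of_le (H := (Units.map (Ideal.Quotient.mk f : B →* B ⧸ f)).ker)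
    fun v hv => ?_
  have hrange (w : Bˣ) (hw : w ∈ (Units.map (Ideal.Quotient.mk f : B →* B ⧸ f)).ker) :
      ∃ a, algebraMap A B a = w := by
    obtain ⟨a, ha⟩ := hf (w - 1) (Ideal.Quotient.eq.1 (congr_arg Units.val hw))
    exact ⟨a + 1, by rw [map_add, ha, map_one, sub_add_cancel]⟩
  obtain ⟨a, ha⟩ := hrange v hv
  obtain ⟨c, hc⟩ := hrange v⁻¹ (inv_mem hv)
  have hac : a * c = 1 := FaithfulSMul.algebraMap_injective A B (by
    rw [map_mul, ha, hc, Units.mul_inv, map_one])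
  exact ⟨Units.mkOfMulEqOne a c hac, Units.ext ha⟩

end Counting

section UnitCount

open QuadraticAlgebra

theorem card_quadraticAlgebra {R : Type*} (a b : R) :
    Nat.card (QuadraticAlgebra R a b) = Nat.card R ^ 2 := by
  rw [Nat.card_congr (equivProd a b), Nat.card_prod, sq]

section Map

variable {R S : Type*} [CommRing R] [CommRing S] (φ : R →+* S) {a b : R} {a' b' : S}

/-- The ring homomorphism `x + y ω ↦ φ x + φ y ω` between quadratic algebras induced by a ring
homomorphism `φ` of the base rings that matches their structure constants. -/
def mapHom (ha : φ a = a') (hb : φ b = b') :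
    QuadraticAlgebra R a b →+* QuadraticAlgebra S a' b' where
  toFun z := ⟨φ z.re, φ z.im⟩
  map_one' := by ext <;> simp
  map_mul' z w := by ext <;> simp [ha, hb]
  map_zero' := by ext <;> simp
  map_add' z w := by ext <;> simp

variable {φ} (ha : φ a = a') (hb : φ b = b')

@[simp]
theorem re_mapHom (z : QuadraticAlgebra R a b) : (mapHom φ ha hb z).re = φ z.re := rfl

@[simp]
theorem im_mapHom (z : QuadraticAlgebra R a b) : (mapHom φ ha hb z).im = φ z.im := rfl

theorem mapHom_surjective (hφ : Function.Surjective φ) :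
    Function.Surjective (mapHom φ ha hb) := by
  rintro ⟨x, y⟩
  obtain ⟨x, rfl⟩ := hφ x
  obtain ⟨y, rfl⟩ := hφ y
  exact ⟨⟨x, y⟩, rfl⟩

theorem norm_mapHom (z : QuadraticAlgebra R a b) :
    QuadraticAlgebra.norm (mapHom φ ha hb z) = φ (QuadraticAlgebra.norm z) := by
  simp [norm_def, ha, hb]

instance isLocalHom_mapHom [IsLocalHom φ] : IsLocalHom (mapHom φ ha hb) where
  map_nonunit z hz := by
    rw [isUnit_iff_norm_isUnit, norm_mapHom] at hz
    exact isUnit_iff_norm_isUnit.2 (hz.of_map φ)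

theorem card_units_quadraticAlgebra_of_prod {T : Type*} [CommRing T] (e : R ≃+* S × T)
    {a'' b'' : T} (ha : e a = (a', a'')) (hb : e b = (b', b'')) :
    Nat.card (QuadraticAlgebra R a b)ˣ =
      Nat.card (QuadraticAlgebra S a' b')ˣ * Nat.card (QuadraticAlgebra T a'' b'')ˣ := by
  let ψ : QuadraticAlgebra R a b →+* QuadraticAlgebra S a' b' × QuadraticAlgebra T a'' b'' :=
    (mapHom ((RingHom.fst S T).comp e.toRingHom) (congr_arg Prod.fst ha)
      (congr_arg Prod.fst hb)).prod
    (mapHom ((RingHom.snd S T).comp e.toRingHom) (congr_arg Prod.snd ha)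
      (congr_arg Prod.snd hb))
  have hψ : Function.Bijective ψ := by
    constructor
    · intro z w h
      obtain ⟨h₁, h₂⟩ := Prod.ext_iff.1 h
      exact QuadraticAlgebra.ext
        (e.injective (Prod.ext (congr_arg re h₁) (congr_arg re h₂)))
        (e.injective (Prod.ext (congr_arg im h₁) (congr_arg im h₂)))
    · rintro ⟨z, w⟩
      refine ⟨⟨e.symm (z.re, w.re), e.symm (z.im, w.im)⟩, ?_⟩
      ext <;> simp [ψ]
  rw [← Nat.card_prod,
    Nat.card_congr (Units.mapEquiv (RingEquiv.ofBijective ψ hψ).toMulEquiv).toEquiv,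
    Nat.card_congr MulEquiv.prodUnits.toEquiv]

end Map

theorem card_units_mul_card {R S : Type*} [CommRing R] [CommRing S]
    (φ : R →+* S) [IsLocalHom φ] (hφ : Function.Surjective φ) :
    Nat.card Rˣ * Nat.card S = Nat.card R * Nat.card Sˣ := by
  have hunits : Function.Surjective (Units.map (φ : R →* S)) := fun v => by
    obtain ⟨x, hx⟩ := hφ v
    exact ⟨(isUnit_of_map_unit φ x (hx ▸ v.isUnit)).unit, Units.ext hx⟩
  have hker : Nat.card (Units.map (φ : R →* S)).ker = Nat.card φ.toAddMonoidHom.ker := by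
    refine Nat.card_congr (Equiv.ofBijective
      (fun u => ⟨((u : Rˣ) : R) - 1, by simpa [sub_eq_zero] using congr_arg Units.val u.2⟩)
      ⟨fun u v h => ?_, fun ⟨x, hx⟩ => ?_⟩)
    · exact Subtype.ext (Units.ext (sub_left_inj.1 (Subtype.ext_iff.1 h)))
    · have hx1 : φ (x + 1) = 1 := by rw [map_add, map_one, show φ x = 0 from hx, zero_add]
      exact ⟨⟨(isUnit_of_map_unit φ (x + 1) (hx1 ▸ isUnit_one)).unit, Units.ext hx1⟩,
        Subtype.ext (add_sub_cancel_right x 1)⟩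
  have hR := φ.toAddMonoidHom.ker.index_mul_card
  have hU := (Units.map (φ : R →* S)).ker.index_mul_card
  rw [AddSubgroup.index_ker, AddMonoidHom.range_eq_top.2 hφ, AddSubgroup.card_top] at hR
  rw [Subgroup.index_ker, MonoidHom.range_eq_top.2 hunits, Subgroup.card_top, hker] at hU
  rw [← hR, ← hU]
  ring

theorem card_units_quadraticAlgebra_field {F : Type*} [Field F] [Finite F] (a b : F) :
    Nat.card (QuadraticAlgebra F a b)ˣ =
      Nat.card Fˣ * (Nat.card {s : F // s ^ 2 + b * s - a ≠ 0} + 1) := by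
  have hnorm (c s : F) : QuadraticAlgebra.norm (⟨c * s, c⟩ : QuadraticAlgebra F a b) =
      c ^ 2 * (s ^ 2 + b * s - a) := by
    simp only [norm_def]; ring
  have hunit (z : QuadraticAlgebra F a b) : IsUnit z ↔ QuadraticAlgebra.norm z ≠ 0 := by
    rw [isUnit_iff_norm_isUnit, isUnit_iff_ne_zero]
  let g : Fˣ × Option {s : F // s ^ 2 + b * s - a ≠ 0} → {z : QuadraticAlgebra F a b // IsUnit z}
    | (c, none) => ⟨⟨c, 0⟩, by simp [hunit, norm_def]⟩
    | (c, some s) => ⟨⟨c * s, c⟩, by simp [hunit, hnorm, s.2]⟩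
  have hg : Function.Bijective g := by
    constructor
    · rintro ⟨c, s⟩ ⟨d, t⟩ h
      have hre := congr_arg (fun z => z.1.re) h
      have him := congr_arg (fun z => z.1.im) h
      rcases s with _ | s <;> rcases t with _ | t
      · rw [Units.ext hre]
      · exact (d.ne_zero him.symm).elim
      · exact (c.ne_zero him).elim
      · obtain rfl : c = d := Units.ext him
        rw [Subtype.ext (mul_left_cancel₀ c.ne_zero hre)]
    · rintro ⟨⟨x, y⟩, hz⟩
      rcases eq_or_ne y 0 with rfl | hy
      · have hx : x ≠ 0 := by rintro rfl; simp [hunit, norm_def] at hz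
        exact ⟨(Units.mk0 x hx, none), rfl⟩
      · have hs : y * (x / y) = x := mul_div_cancel₀ x hy
        rw [hunit, ← hs, hnorm] at hz
        exact ⟨(Units.mk0 y hy, some ⟨x / y, right_ne_zero_of_mul hz⟩), by simp [g, hs]⟩
  rw [Nat.card_congr Submonoid.unitsTypeEquivIsUnitSubmonoid.toEquiv]
  exact (Nat.card_congr (Equiv.ofBijective g hg)).symm.trans (by
    rw [Nat.card_prod, Finite.card_option])

theorem card_units_quadraticAlgebra_mul_of_coprime (a b : ℤ) {m n : ℕ} (h : m.Coprime n) :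
    Nat.card (QuadraticAlgebra (ZMod (m * n)) a b)ˣ =
      Nat.card (QuadraticAlgebra (ZMod m) a b)ˣ *
        Nat.card (QuadraticAlgebra (ZMod n) a b)ˣ :=
  card_units_quadraticAlgebra_of_prod (ZMod.chineseRemainder h) (map_intCast _ a)
    (map_intCast _ b)

theorem card_units_quadraticAlgebra_mul_of_dvd (a b : ℤ) {p n : ℕ} (hp : p ≠ 0) (hn : n ≠ 0)
    (h : p ∣ n) :
    Nat.card (QuadraticAlgebra (ZMod (p * n)) a b)ˣ =
      p ^ 2 * Nat.card (QuadraticAlgebra (ZMod n) a b)ˣ := by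
  have : NeZero (p * n) := ⟨mul_ne_zero hp hn⟩
  let φ := ZMod.castHom (Dvd.intro_left p rfl : n ∣ p * n) (ZMod n)
  have : IsLocalHom φ := by
    refine ⟨fun x hx => ?_⟩
    obtain ⟨k, rfl⟩ := ZMod.natCast_zmod_surjective x
    rw [map_natCast, ZMod.isUnit_iff_coprime] at hx
    exact (ZMod.isUnit_iff_coprime _ _).2 ((hx.coprime_dvd_right h).mul_right hx)
  have hcard := card_units_mul_card (mapHom φ (map_intCast φ a) (map_intCast φ b))
    (mapHom_surjective _ _ (ZMod.ringHom_surjective φ))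
  rw [card_quadraticAlgebra, card_quadraticAlgebra, Nat.card_zmod, Nat.card_zmod] at hcard
  refine Nat.eq_of_mul_eq_mul_right (pow_pos (Nat.pos_of_ne_zero hn) 2) (hcard.trans ?_)
  ring

theorem card_roots_eq_card_sqrt {F : Type*} [Field F] (h2 : (2 : F) ≠ 0) (a b : F) :
    Nat.card {s : F // s ^ 2 + b * s - a = 0} =
      Nat.card {x : F // x ^ 2 = b ^ 2 + 4 * a} := by
  refine Nat.card_congr (((Equiv.mulLeft₀ 2 h2).trans (Equiv.addRight b)).subtypeEquiv fun s => ?_)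
  have hsq : (2 * s + b) ^ 2 - (b ^ 2 + 4 * a) = 2 ^ 2 * (s ^ 2 + b * s - a) := by ring
  change _ ↔ (2 * s + b) ^ 2 = _
  rw [← sub_eq_zero (b := b ^ 2 + 4 * a), hsq, mul_eq_zero_iff_left (pow_ne_zero 2 h2)]

theorem card_roots_zmod_two : ∀ a b : ZMod 2, Nat.card {s : ZMod 2 // s ^ 2 + b * s - a = 0} =
    if b = 0 then 1 else if a = 0 then 2 else 0 := by
  simp only [Nat.card_eq_fintype_card]
  decide

theorem kronSym_two (a b : ℤ) :
    kronSym (b ^ 2 + 4 * a) 2 =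
      if (b : ZMod 2) = 0 then 0 else if (a : ZMod 2) = 0 then 1 else -1 := by
  have hdvd : 2 ∣ b ^ 2 + 4 * a ↔ 2 ∣ b := by
    rw [Int.dvd_add_left (dvd_mul_of_dvd_left (by norm_num) a),
      Int.prime_two.dvd_pow_iff_dvd two_ne_zero]
  have hmod (hb : ¬ 2 ∣ b) : (b ^ 2 + 4 * a) % 8 = if 2 ∣ a then 1 else 5 := by
    have hsq : 8 ∣ b ^ 2 - 1 :=
      Int.eight_dvd_sq_sub_one_of_odd (Int.not_even_iff_odd.1 (even_iff_two_dvd.not.2 hb))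
    split_ifs <;> omega
  rw [kronSym, if_pos rfl]
  simp only [hdvd, ZMod.intCast_zmod_eq_zero_iff_dvd]
  push_cast
  split_ifs with hb ha <;> grind

theorem card_roots_eq_kronSym_add_one (a b : ℤ) (p : ℕ) [Fact p.Prime] :
    (Nat.card {s : ZMod p // s ^ 2 + b * s - a = 0} : ℤ) = kronSym (b ^ 2 + 4 * a) p + 1 := by
  rcases eq_or_ne p 2 with rfl | hp
  · rw [card_roots_zmod_two, kronSym_two]
    split_ifs <;> rfl
  · have h2 : (2 : ZMod p) ≠ 0 := Ring.two_ne_zero (by rwa [ZMod.ringChar_zmod_n])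
    rw [card_roots_eq_card_sqrt h2, kronSym, if_neg hp]
    push_cast
    ring

theorem card_units_quadraticAlgebra_prime (a b : ℤ) (p : ℕ) [Fact p.Prime] :
    (Nat.card (QuadraticAlgebra (ZMod p) a b)ˣ : ℤ) =
      p.totient * (p - kronSym (b ^ 2 + 4 * a) p) := by
  have hcompl : Nat.card {s : ZMod p // s ^ 2 + b * s - a = 0} +
      Nat.card {s : ZMod p // s ^ 2 + b * s - a ≠ 0} = p := by
    rw [← Nat.card_sum, Nat.card_congr (Equiv.sumCompl _), Nat.card_zmod]
  rw [card_units_quadraticAlgebra_field, Nat.card_eq_fintype_card, ZMod.card_units_eq_totient]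
  have hroots := card_roots_eq_kronSym_add_one a b p
  zify at hcompl
  push_cast
  linear_combination (p.totient : ℤ) * (hcompl - hroots)

theorem card_units_quadraticAlgebra_zmod (a b : ℤ) {n : ℕ} (hn : n ≠ 0) :
    (Nat.card (QuadraticAlgebra (ZMod n) a b)ˣ : ℚ) =
      n.totient * (n * ∏ p ∈ n.primeFactors, (1 - (kronSym (b ^ 2 + 4 * a) p : ℚ) / p)) := by
  induction n using induction_on_primes with
  | zero => exact (hn rfl).elim
  | one =>
    have : Subsingleton (QuadraticAlgebra (ZMod 1) a b) :=
      (equivProd _ _).subsingleton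
    simp
  | prime_mul p n hp ih =>
    have hn' : n ≠ 0 := right_ne_zero_of_mul hn
    have : Fact p.Prime := ⟨hp⟩
    by_cases h : p ∣ n
    · have hfactors : (p * n).primeFactors = n.primeFactors := by
        rw [Nat.primeFactors_mul hp.ne_zero hn', hp.primeFactors,
          Finset.union_eq_right.2 (hp.primeFactors ▸ Nat.primeFactors_mono h hn')]
      rw [card_units_quadraticAlgebra_mul_of_dvd a b hp.ne_zero hn' h,
        Nat.totient_mul_of_prime_of_dvd hp h, hfactors]
      push_cast
      rw [ih hn']
      ring
    · have hcop := (Nat.Prime.coprime_iff_not_dvd hp).2 h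
      have hp0 : (p : ℚ) ≠ 0 := Nat.cast_ne_zero.2 hp.ne_zero
      have hprime := congr_arg (Int.cast : ℤ → ℚ) (card_units_quadraticAlgebra_prime a b p)
      push_cast at hprime
      rw [card_units_quadraticAlgebra_mul_of_coprime a b hcop, Nat.totient_mul hcop,
        hcop.primeFactors_mul, Finset.prod_union hcop.disjoint_primeFactors, hp.primeFactors,
        Finset.prod_singleton]
      push_cast
      rw [ih hn', hprime]
      field_simp

end UnitCount

section Quadratic

open Module QuadraticAlgebra

variable {R O : Type*} [CommRing R] [CommRing O] [Algebra R O]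

theorem isCoprime_repr_one (B : Basis (Fin 2) R O) : IsCoprime (B.repr 1 0) (B.repr 1 1) := by
  have h : B 0 = B.repr 1 0 • (B 0 * B 0) + B.repr 1 1 • (B 1 * B 0) := by
    rw [← smul_mul_assoc, ← smul_mul_assoc, ← add_mul,
      ← Fin.sum_univ_two fun i => B.repr 1 i • B i, B.sum_repr, one_mul]
  refine ⟨B.repr (B 0 * B 0) 0, B.repr (B 1 * B 0) 0, ?_⟩
  calc _ = B.repr (B.repr 1 0 • (B 0 * B 0) + B.repr 1 1 • (B 1 * B 0)) 0 := by
        simp [mul_comm]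
    _ = 1 := by rw [← h, B.repr_self, Finsupp.single_eq_same]

theorem exists_basis_zero_eq_one (B : Basis (Fin 2) R O) :
    ∃ C : Basis (Fin 2) R O, C 0 = 1 := by
  obtain ⟨u, v, huv⟩ := isCoprime_repr_one B
  have hdet : B.det ![1, u • B 1 - v • B 0] = 1 := by
    rw [Basis.det_apply, Matrix.det_fin_two]
    simp [Basis.toMatrix_apply]
    linear_combination huv
  obtain ⟨hli, hspan⟩ := B.is_basis_iff_det.2 (hdet ▸ isUnit_one)
  exact ⟨Basis.mk hli hspan.ge, Basis.mk_apply hli hspan.ge 0⟩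

theorem basis_zero (a b : R) : QuadraticAlgebra.basis a b 0 = 1 := by
  ext <;> simp [QuadraticAlgebra.basis]

theorem basis_one (a b : R) : QuadraticAlgebra.basis a b 1 = ω := by
  ext <;> simp [QuadraticAlgebra.basis]

theorem exists_algEquiv_quadraticAlgebra (B : Basis (Fin 2) R O) :
    ∃ a b : R, Nonempty (QuadraticAlgebra R a b ≃ₐ[R] O) := by
  obtain ⟨C, hC⟩ := exists_basis_zero_eq_one B
  have hsq : C 1 * C 1 = C.repr (C 1 * C 1) 0 • 1 + C.repr (C 1 * C 1) 1 • C 1 := by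
    rw [← hC, ← Fin.sum_univ_two fun i => C.repr (C 1 * C 1) i • C i, C.sum_repr]
  have hlift : (lift ⟨C 1, hsq⟩).toLinearMap =
      ((QuadraticAlgebra.basis _ _).equiv C (Equiv.refl _)).toLinearMap := by
    refine Basis.ext (QuadraticAlgebra.basis _ _) (Fin.forall_fin_two.2 ⟨?_, ?_⟩)
    · rw [LinearEquiv.coe_coe, Basis.equiv_apply, Equiv.refl_apply, hC, basis_zero,
        AlgHom.toLinearMap_apply, map_one]
    · rw [LinearEquiv.coe_coe, Basis.equiv_apply, Equiv.refl_apply, basis_one,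
        AlgHom.toLinearMap_apply, lift_apply_apply, omega_re, omega_im, zero_smul,
        one_smul, zero_add]
  refine ⟨_, _, ⟨AlgEquiv.ofBijective (lift ⟨C 1, hsq⟩) ?_⟩⟩
  rw [← AlgHom.coe_toLinearMap, hlift]
  exact LinearEquiv.bijective _

theorem algebraTrace_eq_trace {a b : R} (z : QuadraticAlgebra R a b) :
    Algebra.trace R _ z = QuadraticAlgebra.trace z := by
  rw [Algebra.trace_eq_matrix_trace (QuadraticAlgebra.basis a b), Matrix.trace_fin_two, trace_def]
  simp [Algebra.leftMulMatrix_eq_repr_mul, basis_zero, basis_one]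
  ring

theorem discr_basis (a b : R) : Algebra.discr R (QuadraticAlgebra.basis a b) = b ^ 2 + 4 * a := by
  rw [Algebra.discr_def, Matrix.det_fin_two]
  simp only [Algebra.traceMatrix_apply, Algebra.traceForm_apply, algebraTrace_eq_trace]
  simp [trace_def, basis_zero, basis_one]
  ring

theorem exists_ringEquiv_quadraticAlgebra_of_discr (B : Basis (Fin 2) ℤ O) :
    ∃ a b : ℤ, Algebra.discr ℤ B = b ^ 2 + 4 * a ∧ Nonempty (O ≃+* QuadraticAlgebra ℤ a b) := by
  obtain ⟨a, b, ⟨e⟩⟩ := exists_algEquiv_quadraticAlgebra B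
  refine ⟨a, b, ?_, ⟨e.symm.toRingEquiv⟩⟩
  rw [← discr_basis, Algebra.discr_eq_discr_of_algEquiv _ e,
    Algebra.discr_eq_discr O B ((QuadraticAlgebra.basis a b).map e.toLinearEquiv)]
  rfl

end Quadratic

section Order

theorem mem_iff_index_dvd {G : Type*} [AddCommGroup G] {φ : G →+ ℤ} (hφ : Function.Surjective φ)
    {H : AddSubgroup G} (hH : φ.ker ≤ H) {x : G} : x ∈ H ↔ (H.index : ℤ) ∣ φ x := by
  obtain ⟨g, hg⟩ := Int.subgroup_cyclic (H.map φ)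
  rw [← AddSubgroup.zmultiples_eq_closure] at hg
  rw [← AddSubgroup.index_map_eq H hφ hH, hg, Int.index_zmultiples, Int.natCast_natAbs, abs_dvd,
    ← Int.mem_zmultiples_iff, ← hg, ← AddSubgroup.mem_comap, AddSubgroup.comap_map_eq_self hH]

theorem mem_range_unitsMap_iff {R O : Type*} [CommRing R] [CommRing O] [Algebra R O]
    (S : Subalgebra R O) (u : Oˣ) :
    u ∈ (Units.map (algebraMap S O : S →* O)).range ↔ (u : O) ∈ S ∧ ((u⁻¹ : Oˣ) : O) ∈ S := by
  constructor
  · rintro ⟨v, rfl⟩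
    exact ⟨(v : S).2, ((v⁻¹ : Sˣ) : S).2⟩
  · rintro ⟨hu, hu'⟩
    exact ⟨⟨⟨u, hu⟩, ⟨_, hu'⟩, Subtype.ext u.mul_inv, Subtype.ext u.inv_mul⟩, Units.ext rfl⟩

variable {O : Type*} [CommRing O] {a b : ℤ} (e : O ≃+* QuadraticAlgebra ℤ a b)

/-- The reduction modulo `n` of an order `O` presented as a quadratic algebra. Its kernel `n O` is
the conductor of the order of index `n`. -/
def reduction (n : ℕ) : O →+* QuadraticAlgebra (ZMod n) a b :=
  (mapHom (Int.castRingHom (ZMod n)) (eq_intCast _ a) (eq_intCast _ b)).comp e.toRingHom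

theorem reduction_surjective (n : ℕ) : Function.Surjective (reduction e n) :=
  (mapHom_surjective (eq_intCast (Int.castRingHom (ZMod n)) a) (eq_intCast _ b)
    ZMod.intCast_surjective).comp e.surjective

theorem finite_quotient_ker_reduction (n : ℕ) [NeZero n] :
    Finite (O ⧸ RingHom.ker (reduction e n)) :=
  have : Finite (QuadraticAlgebra (ZMod n) a b) := .of_equiv _ (QuadraticAlgebra.equivProd _ _).symm
  .of_equiv _ (RingHom.quotientKerEquivOfSurjective (reduction_surjective e n)).symm.toEquiv

theorem card_units_quotient_ker_reduction (n : ℕ) :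
    Nat.card (O ⧸ RingHom.ker (reduction e n))ˣ = Nat.card (QuadraticAlgebra (ZMod n) a b)ˣ :=
  Nat.card_congr (Units.mapEquiv
    (RingHom.quotientKerEquivOfSurjective (reduction_surjective e n)).toMulEquiv).toEquiv

variable (S : Subalgebra ℤ O) {n : ℕ} (hn : n = (Subalgebra.toSubmodule S).toAddSubgroup.index)

include e hn

theorem mem_iff_im_reduction_eq_zero (x : O) : x ∈ S ↔ (reduction e n x).im = 0 := by
  let φ : O →+ ℤ := (QuadraticAlgebra.imₗ (a := a) (b := b)).toAddMonoidHom.comp e.toAddMonoidHom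
  have hφ : Function.Surjective φ := fun y => ⟨e.symm ⟨0, y⟩, by simp [φ]⟩
  have hker : φ.ker ≤ (Subalgebra.toSubmodule S).toAddSubgroup := fun y hy => by
    have h : y = algebraMap ℤ O (e y).re := by
      refine e.injective (QuadraticAlgebra.ext ?_ ?_)
      · simp
      · rw [eq_intCast, map_intCast, QuadraticAlgebra.im_intCast]
        exact hy
    exact h ▸ S.algebraMap_mem _
  change x ∈ (Subalgebra.toSubmodule S).toAddSubgroup ↔ (((e x).im : ℤ) : ZMod n) = 0
  rw [mem_iff_index_dvd hφ hker, ← hn, ZMod.intCast_zmod_eq_zero_iff_dvd]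
  rfl

theorem ker_reduction_le_range :
    ∀ x ∈ RingHom.ker (reduction e n), x ∈ Set.range (algebraMap S O) := fun x hx =>
  ⟨⟨x, (mem_iff_im_reduction_eq_zero e S hn x).2 (congr_arg QuadraticAlgebra.im hx)⟩, rfl⟩

/-- The reduction modulo the conductor of the order `S` of index `n`, with values in `ℤ / n`. -/
def orderReduction : S →+* ZMod n where
  toFun s := (reduction e n s).re
  map_one' := congr_arg QuadraticAlgebra.re (map_one (reduction e n))
  map_mul' s t := by simp [(mem_iff_im_reduction_eq_zero e S hn _).1 s.2]
  map_zero' := by simp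
  map_add' s t := by simp

theorem algebraMap_orderReduction (s : S) :
    algebraMap (ZMod n) (QuadraticAlgebra (ZMod n) a b) (orderReduction e S hn s) =
      reduction e n s :=
  QuadraticAlgebra.ext rfl ((mem_iff_im_reduction_eq_zero e S hn s).1 s.2).symm

theorem ker_orderReduction :
    RingHom.ker (orderReduction e S hn) = (RingHom.ker (reduction e n)).under S := by
  ext s
  rw [RingHom.mem_ker, ← QuadraticAlgebra.algebraMap_injective.eq_iff'
    (map_zero (algebraMap (ZMod n) (QuadraticAlgebra (ZMod n) a b))), algebraMap_orderReduction]
  rfl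

theorem card_units_quotient_under_ker_reduction [NeZero n] :
    Nat.card (S ⧸ (RingHom.ker (reduction e n)).under S)ˣ = n.totient := by
  rw [← ker_orderReduction e S hn,
    Nat.card_congr (Units.mapEquiv (RingHom.quotientKerEquivOfSurjective
      (ZMod.ringHom_surjective (orderReduction e S hn))).toMulEquiv).toEquiv,
    Nat.card_eq_fintype_card, ZMod.card_units_eq_totient]

theorem finiteIndex_range_unitsMap [NeZero n] :
    (Units.map (algebraMap S O : S →* O)).range.FiniteIndex :=
  have := finite_quotient_ker_reduction e n
  finiteIndex_range_units (ker_reduction_le_range e S hn)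

theorem card_pic_mul_index_mul_totient [NeZero n] :
    Nat.card (CommRing.Pic S) * (Units.map (algebraMap S O : S →* O)).range.index * n.totient =
      Nat.card (CommRing.Pic O) * Nat.card (QuadraticAlgebra (ZMod n) a b)ˣ := by
  have : Module.Finite ℤ O :=
    .of_basis ((QuadraticAlgebra.basis a b).map e.symm.toIntAlgEquiv.toLinearEquiv)
  have : IsNoetherianRing O := .of_finite ℤ O
  have : FaithfulSMul S (FractionRing O) := by
    rw [faithfulSMul_iff_algebraMap_injective, IsScalarTower.algebraMap_eq S O]
    exact (FaithfulSMul.algebraMap_injective O _).comp Subtype.val_injective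
  have := finite_quotient_ker_reduction e n
  rw [← card_units_quotient_under_ker_reduction e S hn, ← card_units_quotient_ker_reduction e n]
  exact card_pic_mul_index_mul_card_units (FractionRing O) (ker_reduction_le_range e S hn)

end Order

end QuadraticOrder

open QuadraticOrder

theorem stmt11_general {O : Type*} [CommRing O] (B : Module.Basis (Fin 2) ℤ O)
    (S : Subalgebra ℤ O)
    (n : ℕ) (hn : n = (Subalgebra.toSubmodule S).toAddSubgroup.index) (hn0 : n ≠ 0)
    (U : Subgroup Oˣ)
    (hU : ∀ u : Oˣ, u ∈ U ↔ ((u : O) ∈ S ∧ ((u⁻¹ : Oˣ) : O) ∈ S)) :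
    (Nat.card (CommRing.Pic S) : ℚ) =
      (Nat.card (CommRing.Pic O) : ℚ) / (U.index : ℚ) * n *
        ∏ p ∈ n.primeFactors, (1 - (kronSym (Algebra.discr ℤ B) p : ℚ) / p) := by
  obtain ⟨a, b, hdiscr, ⟨e⟩⟩ := exists_ringEquiv_quadraticAlgebra_of_discr B
  have : NeZero n := ⟨hn0⟩
  obtain rfl : U = (Units.map (algebraMap S O : S →* O)).range :=
    Subgroup.ext fun u => (hU u).trans (mem_range_unitsMap_iff S u).symm
  have hindex : ((Units.map (algebraMap S O : S →* O)).range.index : ℚ) ≠ 0 :=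
    Nat.cast_ne_zero.2 (finiteIndex_range_unitsMap e S hn).index_ne_zero
  have hφ : (n.totient : ℚ) ≠ 0 :=
    Nat.cast_ne_zero.2 (Nat.totient_pos.2 (Nat.pos_of_ne_zero hn0)).ne'
  have hcard := congr_arg (Nat.cast : ℕ → ℚ) (card_pic_mul_index_mul_totient e S hn)
  push_cast at hcard
  rw [card_units_quadraticAlgebra_zmod a b hn0, ← hdiscr] at hcard
  refine mul_right_cancel₀ (mul_ne_zero hindex hφ) ?_
  rw [← mul_assoc, hcard]
  field_simp

/-- The Picard group formula for an order `S` of index `n` in the maximal order of a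
quadratic number field `K`:
`#Pic(S) = #Pic(O_K)/[O_K^× : S^×] · n · ∏_{p ∣ n} (1 − (Δ_K/p)/p)`. -/
theorem stmt11 (K : Type*) [Field K] [NumberField K]
    (hdeg : Module.finrank ℚ K = 2)
    (S : Subalgebra ℤ (𝓞 K))
    (n : ℕ) (hn : n = (Subalgebra.toSubmodule S).toAddSubgroup.index) (hn0 : n ≠ 0)
    (U : Subgroup (𝓞 K)ˣ)
    (hU : ∀ u : (𝓞 K)ˣ, u ∈ U ↔ ((u : 𝓞 K) ∈ S ∧ ((u⁻¹ : (𝓞 K)ˣ) : 𝓞 K) ∈ S)) :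
    (Nat.card (ClassGroup ↥S) : ℚ) =
      (Nat.card (ClassGroup (𝓞 K)) : ℚ) / (U.index : ℚ) * n *
        ∏ p ∈ n.primeFactors, (1 - (kronSym (NumberField.discr K) p : ℚ) / p) := by
  let B := Module.finBasisOfFinrankEq ℤ (𝓞 K) ((RingOfIntegers.rank K).trans hdeg)
  rw [Nat.card_congr (ClassGroup.equivPic S).toEquiv,
    Nat.card_congr (ClassGroup.equivPic (𝓞 K)).toEquiv, ← discr_eq_discr K B]
  exact stmt11_general B S n hn hn0 U hU
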